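/- Let h be a Brouwer homeomorphism of ℝ². If α is a translation arc for h (a simple arc from some point p to h(p) with α ∩ h(α) = {h(p)}), then the trajectory l = ⋃_{n ∈ ℤ} hⁿ(α) is a topological submanifold of ℝ² homeomorphic to ℝ. -/

import Mathlib

/-!
The trajectory is parametrized by a continuous `e : ℝ → ℂ` with `e (s + 1) = h (e s)`. Two facts on
`h` are used. Since `h` is isotopic to the identity, `(h y - h x) / (y - x)` has a symmetric
continuous logarithm `L` on pairs of distinct points (`exists_directionLog_of_isotopy`). Since `h`
has no fixed point and the plane is contractible, `h x - x` has a continuous logarithm `M`.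

Suppose first that `e` is not injective, and take a coincidence `e 0 = e d` (after a shift of the
parameter) with `d > 0` minimal; then `d > 1`, and `e t - e s` has a continuous logarithm
`ℓ (s, t)` on the strip `0 < t - s < d`. As in Hopf's proof of the Umlaufsatz, compare `ℓ` at
`(0, 1)`, `(1, d)` and `(d, d + 1)`. Because `e d - e t = -(e t - e 0)`, the difference
`ℓ (t, d) - ℓ (0, t)` is a constant `κ` with `exp κ = -1`; because `L` is symmetric,
`ℓ (t + 1, d + 1) - ℓ (1, t + 1)` is the same constant. Taking `t = 1` and `t = d - 1` gives
`ℓ (d, d + 1) - ℓ (0, 1) = 2 κ`. But `ℓ (s, s + 1) - M (e s)` is constant and `e d = e 0`, so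
`2 κ = 0`, which is absurd. This is Brouwer's lemma, `trajectory_injective`.

If `e` is injective but `e t` comes back arbitrarily close to `e 0` for `t ≥ 1`, the same computation
at times `d` of closest return holds up to an error tending to `0`, so `κ → 0` and the same
contradiction results (`no_forward_return`). Both cases are instances of
`almost_closed_identity`. Applying the second one to `h` and to its inverse shows that `e` does not
accumulate on itself, so that `e` is an embedding (`trajectory_isEmbedding`).
-/


abbrev Plane := EuclideanSpace ℝ (Fin 2)

def IsotopicToId {X : Type*} [TopologicalSpace X] (f : X → X) : Prop :=
  ∃ F : ℝ → X → X, Continuous (fun p : ℝ × X => F p.1 p.2) ∧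
    (∀ t : ℝ, ∃ g : Homeomorph X X, ⇑g = F t) ∧ F 0 = id ∧ F 1 = f

open Complex Set Filter Topology unitInterval

/-! ### Continuous logarithms -/

/-- Homotopy lifting for `exp`. -/
lemma exists_log_homotopy {A : Type*} [TopologicalSpace A] (G : I × A → ℂ)
    (hc : Continuous G) (hne : ∀ q, G q ≠ 0) (h0 : ∀ a, G (0, a) = 1) :
    ∃ Λ : I × A → ℂ, Continuous Λ ∧ (∀ q, exp (Λ q) = G q) ∧ ∀ a, Λ (0, a) = 0 := by
  let G' : C(I × A, {z : ℂ // z ≠ 0}) := ⟨fun q => ⟨G q, hne q⟩, by fun_prop⟩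
  have H0 : ∀ a, G' (0, a) =
      (fun z : ℂ ↦ (⟨_, z.exp_ne_zero⟩ : {z : ℂ // z ≠ 0})) ((0 : C(A, ℂ)) a) := by
    intro a
    apply Subtype.ext
    simp [G', h0]
  refine ⟨isCoveringMap_exp.liftHomotopy G' 0 H0, ContinuousMap.continuous _, fun q => ?_,
    fun a => isCoveringMap_exp.liftHomotopy_zero G' 0 H0 a⟩
  exact congrArg Subtype.val (congrFun (isCoveringMap_exp.liftHomotopy_lifts G' 0 H0) q)

/-- A nowhere vanishing continuous function on a convex set has a continuous logarithm. -/
lemma exists_log_of_convex {E : Type*} [NormedAddCommGroup E] [NormedSpace ℝ E] {S : Set E}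
    (hS : Convex ℝ S) {f : E → ℂ} (hf : ContinuousOn f S) (hne : ∀ x ∈ S, f x ≠ 0) :
    ∃ ℓ : E → ℂ, ContinuousOn ℓ S ∧ ∀ x ∈ S, exp (ℓ x) = f x := by
  classical
  rcases S.eq_empty_or_nonempty with rfl | ⟨a, ha⟩
  · exact ⟨0, by simp, by simp⟩
  have hmem : ∀ (t : I) (x : S), a + (t : ℝ) • ((x : E) - a) ∈ S := fun t x =>
    hS.add_smul_sub_mem ha x.2 t.2
  obtain ⟨Λ, hΛ, hexp, -⟩ := exists_log_homotopy (A := S)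
    (fun q => f (a + (q.1 : ℝ) • ((q.2 : E) - a)) / f a)
    (by
      refine Continuous.div_const ?_ _
      exact hf.comp_continuous (by fun_prop) fun q => hmem q.1 q.2)
    (fun q => div_ne_zero (hne _ (hmem _ _)) (hne _ ha)) (fun x => by simp [hne a ha])
  refine ⟨fun x => if hx : x ∈ S then Λ (1, ⟨x, hx⟩) + log (f a) else 0, ?_, fun x hx => ?_⟩
  · rw [continuousOn_iff_continuous_domRestrict]
    have : Continuous fun x : S => Λ (1, x) + log (f a) := by fun_prop
    convert this using 2 with x
    simp
  · simp only [hx, dif_pos, exp_add, hexp, exp_log (hne a ha)]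
    simp [hne a ha]

/-- Two continuous logarithms of the same function differ by a constant on a connected set; this is
the form in which every comparison of logarithms below is made. -/
lemma eq_of_exp_eq_const {X : Type*} [TopologicalSpace X] {S : Set X} (hS : IsPreconnected S)
    {u : X → ℂ} (hu : ContinuousOn u S) {w : ℂ} (hw : ∀ x ∈ S, exp (u x) = w)
    {x y : X} (hx : x ∈ S) (hy : y ∈ S) : u x = u y :=
  isCoveringMap_exp.constOn_of_comp hS hu
    (fun a ha b hb => Subtype.ext ((hw a ha).trans (hw b hb).symm)) hx hy

/-! ### Orientation preservation -/

/-- `L` is a symmetric continuous logarithm of the quotient `(h y - h x) / (y - x)` on the space of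
pairs `(x, y)` of distinct points of the plane. The existence of such an `L` is the form in which
the orientation hypothesis on `h` is used. -/
def IsDirectionLog (h : ℂ → ℂ) (L : ℂ × ℂ → ℂ) : Prop :=
  ContinuousOn L {q | q.1 ≠ q.2} ∧
    (∀ x y, x ≠ y → h y - h x = exp (L (x, y)) * (y - x)) ∧ ∀ x y, x ≠ y → L (x, y) = L (y, x)

/-- The configuration space of ordered pairs of distinct points of the plane. -/
abbrev DistinctPairs : Type := {q : ℂ × ℂ // q.1 ≠ q.2}

/-- The quotient `(F t y - F t x) / (y - x)` is a homotopy starting at the constant `1`, so its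
logarithm can be followed along the isotopy. -/
lemma exists_directionLog_of_isotopy (F : ℝ → ℂ → ℂ)
    (hF : Continuous fun q : ℝ × ℂ => F q.1 q.2) (hinj : ∀ t, Function.Injective (F t))
    (h0 : F 0 = id) : ∃ L, IsDirectionLog (F 1) L := by
  classical
  have hne : ∀ q : DistinctPairs, q.1.2 - q.1.1 ≠ 0 := fun q => sub_ne_zero.2 q.2.symm
  let G : I × DistinctPairs → ℂ := fun q => (F q.1 q.2.1.2 - F q.1 q.2.1.1) / (q.2.1.2 - q.2.1.1)
  have hG : Continuous G := by
    refine Continuous.div ?_ (by fun_prop) fun q => hne q.2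
    exact (hF.comp (g := fun q : ℝ × ℂ => F q.1 q.2)
      (f := fun q : I × DistinctPairs => ((q.1 : ℝ), q.2.1.2)) (by fun_prop)).sub
      (hF.comp (g := fun q : ℝ × ℂ => F q.1 q.2)
        (f := fun q : I × DistinctPairs => ((q.1 : ℝ), q.2.1.1)) (by fun_prop))
  obtain ⟨Λ, hΛ, hexp, hzero⟩ := exists_log_homotopy G hG
    (fun q => div_ne_zero (sub_ne_zero.2 fun hq => q.2.2 (hinj _ hq).symm) (hne q.2))
    (fun q => by simp [G, h0, hne q])
  refine ⟨fun q => if hq : q.1 ≠ q.2 then Λ (1, ⟨q, hq⟩) else 0, ?_, ?_, ?_⟩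
  · rw [continuousOn_iff_continuous_domRestrict]
    have : Continuous fun q : DistinctPairs => Λ (1, q) := by fun_prop
    refine this.congr fun q => ?_
    rw [Set.domRestrict_apply]
    have hq : q.1.1 ≠ q.1.2 := q.2
    rw [dif_pos hq]
  · intro x y hxy
    have := hexp (1, ⟨(x, y), hxy⟩)
    simp only [ne_eq, hxy, not_false_eq_true, dif_pos, this, G]
    have := hne ⟨(x, y), hxy⟩
    simp only at this
    simp only [Icc.coe_one]
    field_simp
  · intro x y hxy
    -- both sides lift the same path of quotients, starting from `0`
    have key : Λ (1, ⟨(x, y), hxy⟩) - Λ (1, ⟨(y, x), hxy.symm⟩) =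
        Λ (0, ⟨(x, y), hxy⟩) - Λ (0, ⟨(y, x), hxy.symm⟩) := by
      refine eq_of_exp_eq_const (S := univ) (w := 1)
        (u := fun t : I => Λ (t, ⟨(x, y), hxy⟩) - Λ (t, ⟨(y, x), hxy.symm⟩))
        isPreconnected_univ (by fun_prop) (fun t _ => ?_) (mem_univ _) (mem_univ _)
      rw [exp_sub, hexp, hexp, div_eq_one_iff_eq]
      · simp only [G]
        rw [← neg_sub (F t x), ← neg_sub x y, neg_div_neg_eq]
      · rw [← hexp]; exact exp_ne_zero _
    rw [hzero, hzero, sub_self, sub_eq_zero] at key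
    simp only [ne_eq, hxy, hxy.symm, not_false_eq_true, dif_pos, key]

lemma IsDirectionLog.symm {H : ℂ ≃ₜ ℂ} {L : ℂ × ℂ → ℂ} (hL : IsDirectionLog H L) :
    IsDirectionLog H.symm fun q => -L (H.symm q.1, H.symm q.2) := by
  obtain ⟨hc, hm, hs⟩ := hL
  have hne : ∀ x y, x ≠ y → H.symm x ≠ H.symm y := fun x y hxy => H.symm.injective.ne hxy
  refine ⟨?_, fun x y hxy => ?_, fun x y hxy => by simp only [hs _ _ (hne x y hxy)]⟩
  · refine (hc.comp (f := fun q : ℂ × ℂ => (H.symm q.1, H.symm q.2)) ?_ ?_).neg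
    · exact (by fun_prop : Continuous _).continuousOn
    · exact fun q hq => hne _ _ hq
  · have := hm _ _ (hne x y hxy)
    simp only [Homeomorph.apply_symm_apply] at this
    rw [this, exp_neg, inv_mul_cancel_left₀ (exp_ne_zero _)]

/-! ### The index computation -/

/-- The index identity. Suppose that the trajectory `e` has no self-intersection on parameter
windows shorter than `d`, and that `e d` is at least as close to `e 0` as the points `e t` with `t`
between `1` and `d - 1`. Let `ℓ (s, t)` be a continuous logarithm of `e t - e s` for
`0 < t - s < d`, and move from `(0, 1)` to `(1, d)` and then to `(d, d + 1)`. Each of the two moves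
exchanges (almost) the roles of the two ends of a nearly closed curve, and so contributes the same
odd multiple `κ` of `π i`, up to the displayed error terms; the second contribution equals the first
because `ℓ (s + 1, t + 1) - ℓ (s, t)` is `L (e s, e t)` up to a constant and `L` is symmetric. On
the other hand `ℓ (s, s + 1)` is `M (e s)` up to a constant. -/
lemma almost_closed_identity {h : ℂ → ℂ} {L : ℂ × ℂ → ℂ} (hL : IsDirectionLog h L) {M : ℂ → ℂ}
    (hM : Continuous M) (hMexp : ∀ x, exp (M x) = h x - x) {e : ℝ → ℂ} (he : Continuous e)
    (hstep : ∀ s, e (s + 1) = h (e s)) {d : ℝ} (hd : 1 < d)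
    (hinj : ∀ s t, s < t → t - s < d → e s ≠ e t)
    (hmin : ∀ t ∈ uIcc 1 (d - 1), ‖e d - e 0‖ ≤ ‖e t - e 0‖) :
    ∃ κ : ℂ, exp κ = -1 ∧ M (e d) - M (e 0) = 2 * κ + log ((e d - e 1) / (e 0 - e 1)) +
      log ((e d - e (d - 1)) / (e 0 - e (d - 1))) +
      (L (e (d - 1), e d) - L (e (d - 1), e 0)) := by
  obtain ⟨hLc, hLm, hLs⟩ := hL
  let D : Set (ℝ × ℝ) := {q | q.1 < q.2 ∧ q.2 - q.1 < d}
  have hD : Convex ℝ D := by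
    have h1 : Convex ℝ {q : ℝ × ℝ | 0 < (LinearMap.snd ℝ ℝ ℝ - LinearMap.fst ℝ ℝ ℝ) q} :=
      convex_halfSpace_gt (LinearMap.isLinear _) 0
    have h2 : Convex ℝ {q : ℝ × ℝ | (LinearMap.snd ℝ ℝ ℝ - LinearMap.fst ℝ ℝ ℝ) q < d} :=
      convex_halfSpace_lt (LinearMap.isLinear _) d
    convert h1.inter h2 using 1
    ext q
    simp [D]
  obtain ⟨ℓ, hℓc, hℓ⟩ := exists_log_of_convex hD (f := fun q => e q.2 - e q.1)
    (by fun_prop) (fun q hq => sub_ne_zero.2 (hinj _ _ hq.1 hq.2).symm)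
  have hℓ' : ∀ s t, s < t → t - s < d → exp (ℓ (s, t)) = e t - e s := fun s t h1 h2 =>
    hℓ (s, t) ⟨h1, h2⟩
  -- translating both parameters by one changes `ℓ` by `L`, up to a constant
  have hshift : ∀ q ∈ D, ∀ q' ∈ D,
      ℓ (q.1 + 1, q.2 + 1) - ℓ q - L (e q.1, e q.2) =
      ℓ (q'.1 + 1, q'.2 + 1) - ℓ q' - L (e q'.1, e q'.2) := by
    intro q hq q' hq'
    refine eq_of_exp_eq_const (w := 1)
      (u := fun q : ℝ × ℝ => ℓ (q.1 + 1, q.2 + 1) - ℓ q - L (e q.1, e q.2))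
      hD.isPreconnected (ContinuousOn.sub (ContinuousOn.sub ?_ hℓc) ?_) (fun q hq => ?_) hq hq'
    · refine hℓc.comp (f := fun q : ℝ × ℝ => (q.1 + 1, q.2 + 1)) (by fun_prop) ?_
      intro q hq
      exact ⟨by simpa using hq.1, by simpa using hq.2⟩
    · refine hLc.comp (f := fun q : ℝ × ℝ => (e q.1, e q.2)) (by fun_prop) ?_
      exact fun q hq => hinj _ _ hq.1 hq.2
    · have hne := hinj _ _ hq.1 hq.2
      have hne' : e q.2 - e q.1 ≠ 0 := sub_ne_zero.2 hne.symm
      rw [exp_sub, exp_sub, hℓ q hq,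
        hℓ' _ _ (by linarith [hq.1]) (by linarith [hq.2]), hstep, hstep, hLm _ _ hne]
      field_simp [exp_ne_zero]
  -- on the line `t = s + 1`, `ℓ` is `M` along the trajectory, up to a constant
  have hdiag : ℓ (d, d + 1) - M (e d) = ℓ (0, 0 + 1) - M (e 0) := by
    refine eq_of_exp_eq_const (S := univ) (w := 1)
      (u := fun s : ℝ => ℓ (s, s + 1) - M (e s)) isPreconnected_univ
      (ContinuousOn.sub ?_ (by fun_prop)) (fun s _ => ?_) (mem_univ _) (mem_univ _)
    · refine hℓc.comp (f := fun s : ℝ => (s, s + 1)) (by fun_prop) ?_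
      exact fun s _ => ⟨by simp, by simpa using hd⟩
    · have h1 := hℓ' s (s + 1) (by linarith) (by linarith)
      have h2 := hMexp (e s)
      rw [← hstep] at h2
      rw [exp_sub, h1, ← h2, div_self (exp_ne_zero _)]
  have hT : ∀ t ∈ uIcc 1 (d - 1), 0 < t ∧ t < d := by
    intro t ht
    rcases mem_uIcc.1 ht with ht | ht <;> constructor <;> linarith [ht.1, ht.2]
  let r : ℝ → ℂ := fun t => (e d - e t) / (e 0 - e t)
  have hr0 : ∀ t ∈ uIcc 1 (d - 1), e 0 - e t ≠ 0 := fun t ht =>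
    sub_ne_zero.2 (hinj _ _ (hT t ht).1 (by linarith [(hT t ht).2]))
  have hrd : ∀ t ∈ uIcc 1 (d - 1), e d - e t ≠ 0 := fun t ht =>
    sub_ne_zero.2 (hinj _ _ (hT t ht).2 (by linarith [(hT t ht).1])).symm
  have hrne : ∀ t ∈ uIcc 1 (d - 1), r t ≠ 0 := fun t ht => div_ne_zero (hrd t ht) (hr0 t ht)
  have hslit : ∀ t ∈ uIcc 1 (d - 1), r t ∈ slitPlane := by
    intro t ht
    have h1 : ‖r t - 1‖ ≤ 1 := by
      have : r t - 1 = (e d - e 0) / (e 0 - e t) := by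
        have := hr0 t ht
        simp only [r]
        field_simp
        ring
      rw [this, norm_div, norm_sub_rev (e 0)]
      exact div_le_one_of_le₀ (hmin t ht) (norm_nonneg _)
    rw [mem_slitPlane_iff]
    by_contra! hcon
    obtain ⟨hre, him⟩ := hcon
    have h2 : r t = ((r t).re : ℂ) := Complex.ext (by simp) (by simp [him])
    have h3 := (abs_re_le_norm (r t - 1)).trans h1
    have h4 : (r t).re ≠ 0 := fun h => hrne t ht (by rw [h2, h]; simp)
    have h5 : (r t).re < 0 := lt_of_le_of_ne hre h4
    have := neg_le_abs (r t - 1).re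
    simp only [sub_re, one_re] at this h3
    linarith
  -- `e d - e t` and `e t - e 0` are opposite up to the factor `r t`, which has a principal logarithm
  have hu : ContinuousOn (fun t => ℓ (t, d) - ℓ (0, t) - log (r t)) (uIcc 1 (d - 1)) := by
    refine ContinuousOn.sub (ContinuousOn.sub ?_ ?_) ?_
    · refine hℓc.comp (f := fun t : ℝ => (t, d)) (by fun_prop) fun t ht => ?_
      exact ⟨(hT t ht).2, by simpa using (hT t ht).1⟩
    · refine hℓc.comp (f := fun t : ℝ => (0, t)) (by fun_prop) fun t ht => ?_
      exact ⟨(hT t ht).1, by simpa using (hT t ht).2⟩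
    · refine ContinuousOn.clog (ContinuousOn.div (by fun_prop) (by fun_prop) hr0) hslit
  have huexp : ∀ t ∈ uIcc 1 (d - 1), exp (ℓ (t, d) - ℓ (0, t) - log (r t)) = -1 := by
    intro t ht
    rw [exp_sub, exp_sub, exp_log (hrne t ht), hℓ' _ _ (hT t ht).2 (by linarith [(hT t ht).1]),
      hℓ' _ _ (hT t ht).1 (by linarith [(hT t ht).2])]
    have h1 := hr0 t ht
    have h2 := hrd t ht
    have h3 : e t - e 0 ≠ 0 := by rw [← neg_sub]; exact neg_ne_zero.2 h1
    simp only [r]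
    rw [← neg_sub (e 0) (e t)]
    field_simp
  have hone : (1 : ℝ) ∈ uIcc 1 (d - 1) := left_mem_uIcc
  have hlast : d - 1 ∈ uIcc 1 (d - 1) := right_mem_uIcc
  refine ⟨ℓ (1, d) - ℓ (0, 1) - log (r 1), huexp 1 hone, ?_⟩
  have hκ := eq_of_exp_eq_const isPreconnected_uIcc hu huexp hone hlast
  have hsh := hshift (d - 1, d) ⟨by simp, by simpa using hd⟩ (0, d - 1)
    ⟨by simpa using hd, by simp⟩
  have hsym := hLs (e 0) (e (d - 1)) (sub_ne_zero.1 (hr0 _ hlast))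
  simp only [sub_add_cancel, zero_add] at hsh hκ hdiag
  simp only [r] at hκ ⊢
  rw [hsym] at hsh
  linear_combination hsh - hdiag - hκ

/-! ### Trajectories -/

lemma trajectory_add_int (H : ℂ ≃ₜ ℂ) {e : ℝ → ℂ} (hstep : ∀ s, e (s + 1) = H (e s)) (n : ℤ) :
    ∀ s, e (s + n) = (H ^ n) (e s) := by
  induction n using Int.induction_on with
  | zero => intro s; simp
  | succ n ih =>
    intro s
    rw [zpow_add_one, Homeomorph.mul_apply, ← hstep, ← ih]
    congr 1; push_cast; ring
  | pred n ih =>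
    intro s
    have h1 : (H⁻¹ : ℂ ≃ₜ ℂ) (e s) = e (s - 1) := by
      rw [Homeomorph.inv_apply, Homeomorph.symm_apply_eq, ← hstep, sub_add_cancel]
    rw [zpow_sub_one, Homeomorph.mul_apply, h1, ← ih]
    congr 1; push_cast; ring

lemma trajectory_shift {H : ℂ ≃ₜ ℂ} {e : ℝ → ℂ} (hstep : ∀ s, e (s + 1) = H (e s)) {s t : ℝ}
    (n : ℤ) (hst : e s = e t) : e (s + n) = e (t + n) := by
  rw [trajectory_add_int H hstep, trajectory_add_int H hstep, hst]

/-- Brouwer's lemma on translation arcs. At a coincidence `e a = e (a + δ)` with `δ` minimal, all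
error terms of `almost_closed_identity` vanish, so `κ = 0`, contradicting `exp κ = -1`. -/
lemma trajectory_injective {H : ℂ ≃ₜ ℂ} {L : ℂ × ℂ → ℂ} (hL : IsDirectionLog H L)
    (hfree : ∀ x, H x ≠ x) {e : ℝ → ℂ} (he : Continuous e) (hstep : ∀ s, e (s + 1) = H (e s))
    (hloc : ∀ s t, s < t → t ≤ s + 1 → e s ≠ e t) : Function.Injective e := by
  suffices key : ∀ s t, s < t → e s ≠ e t by
    intro s t hst
    by_contra hne
    rcases lt_or_gt_of_ne hne with h | h
    exacts [key _ _ h hst, key _ _ h hst.symm]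
  intro s₀ t₀ hlt heq
  have hfr : ∀ s t, e s = e t → e (Int.fract s) = e (Int.fract s + (t - s)) := by
    intro s t hst
    have := trajectory_shift hstep (-⌊s⌋) hst
    convert this using 2 <;> rw [Int.fract] <;> push_cast <;> ring
  have h1 : 1 < t₀ - s₀ := by
    by_contra! hle
    exact hloc _ _ hlt (by linarith) heq
  -- a coincidence `e a = e (a + δ)` with the smallest possible `δ`
  let K : Set (ℝ × ℝ) := (Icc 0 1 ×ˢ Icc 1 (t₀ - s₀)) ∩ {q | e q.1 = e (q.1 + q.2)}
  have hK : IsCompact K := (isCompact_Icc.prod isCompact_Icc).inter_right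
    (isClosed_eq (by fun_prop) (by fun_prop))
  have hmem : ∀ s t, e s = e t → 1 ≤ t - s → t - s ≤ t₀ - s₀ → (Int.fract s, t - s) ∈ K :=
    fun s t hst h1 h2 => ⟨⟨⟨Int.fract_nonneg _, (Int.fract_lt_one _).le⟩, h1, h2⟩, hfr s t hst⟩
  obtain ⟨⟨a, δ⟩, haδ, hmin⟩ := hK.exists_isMinOn ⟨_, hmem s₀ t₀ heq h1.le le_rfl⟩
    continuous_snd.continuousOn
  obtain ⟨⟨-, hδ1, hδ2⟩, hcl⟩ := haδ
  simp only [mem_ofPred_eq] at hcl hδ1 hδ2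
  have hδ : 1 < δ := by
    rcases hδ1.lt_or_eq with h | h
    · exact h
    · exact absurd hcl (hloc a (a + δ) (by linarith) (by linarith))
  have hinj : ∀ s t, s < t → t - s < δ → e s ≠ e t := by
    intro s t hst hd hse
    by_cases h : t - s ≤ 1
    · exact hloc s t hst (by linarith) hse
    · have := hmin (hmem s t hse (by linarith) (by linarith))
      simp only [mem_ofPred_eq] at this
      linarith
  obtain ⟨M, hM, hMexp⟩ := exists_log_of_convex convex_univ (f := fun x => H x - x)
    (by fun_prop) (fun x _ => sub_ne_zero.2 (hfree x))
  have h0 : e (a + δ) = e (a + 0) := by rw [add_zero, hcl]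
  have hsub : ∀ t ∈ uIcc 1 (δ - 1), e (a + 0) - e (a + t) ≠ 0 := by
    intro t ht
    have : 0 < t ∧ t < δ := by
      rcases mem_uIcc.1 ht with ht | ht <;> constructor <;> linarith [ht.1, ht.2]
    exact sub_ne_zero.2 (hinj _ _ (by linarith) (by linarith))
  obtain ⟨κ, hκ, hid⟩ := almost_closed_identity hL (continuousOn_univ.1 hM)
    (fun x => hMexp x (mem_univ _)) (e := fun s => e (a + s)) (by fun_prop)
    (fun s => by simp only [← hstep, add_assoc]) hδ
    (fun s t hst hd => hinj _ _ (by linarith) (by linarith))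
    (fun t _ => by simp [hcl])
  simp only [h0] at hid
  rw [div_self (hsub _ left_mem_uIcc), div_self (hsub _ right_mem_uIcc)] at hid
  have : κ = 0 := by simpa using hid
  rw [this, exp_zero] at hκ
  norm_num at hκ

/-- The trajectory does not return near `e 0` in the future: along a sequence of closest returns
`e d → e 0` all error terms of `almost_closed_identity` would tend to `0`, hence so would `κ`,
contradicting `exp κ = -1`. -/
lemma no_forward_return {H : ℂ ≃ₜ ℂ} {L : ℂ × ℂ → ℂ} (hL : IsDirectionLog H L)
    (hfree : ∀ x, H x ≠ x) {e : ℝ → ℂ} (he : Continuous e) (hstep : ∀ s, e (s + 1) = H (e s))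
    (hinj : Function.Injective e) : ∃ ε > 0, ∀ t, 1 ≤ t → ε ≤ ‖e t - e 0‖ := by
  by_contra! hcon
  have hnorm : Continuous fun t => ‖e t - e 0‖ := by fun_prop
  have hpos : ∀ t, 1 ≤ t → 0 < ‖e t - e 0‖ := fun t ht =>
    norm_pos_iff.2 (sub_ne_zero.2 (hinj.ne (by linarith)))
  obtain ⟨b, hb, hbmin⟩ := isCompact_Icc.exists_isMinOn (nonempty_Icc.2 (by norm_num : (1 : ℝ) ≤ 2))
    hnorm.continuousOn
  -- closest returns: times `d ≥ 2` at which `e d` is at least as close to `e 0` as all of `e [1, d]`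
  have hret : ∀ n : ℕ, ∃ d : ℝ, 2 ≤ d ∧ ‖e d - e 0‖ ≤ 1 / ((n : ℝ) + 1) ∧
      ∀ t ∈ Icc 1 d, ‖e d - e 0‖ ≤ ‖e t - e 0‖ := by
    intro n
    obtain ⟨t, ht1, ht⟩ := hcon (min (1 / ((n : ℝ) + 1)) ‖e b - e 0‖)
      (lt_min (by positivity) (hpos b hb.1))
    obtain ⟨ht2, ht3⟩ := lt_min_iff.1 ht
    obtain ⟨d, hd, hdmin⟩ := isCompact_Icc.exists_isMinOn (nonempty_Icc.2 ht1) hnorm.continuousOn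
    have hdt : ‖e d - e 0‖ ≤ ‖e t - e 0‖ := hdmin (right_mem_Icc.2 ht1)
    refine ⟨d, ?_, by linarith, fun s hs => hdmin ⟨hs.1, hs.2.trans hd.2⟩⟩
    by_contra! hlt
    have : ‖e b - e 0‖ ≤ ‖e d - e 0‖ := hbmin ⟨hd.1, hlt.le⟩
    linarith
  choose d hd2 hdn hdmin using hret
  obtain ⟨M, hM, hMexp⟩ := exists_log_of_convex convex_univ (f := fun x => H x - x)
    (by fun_prop) (fun x _ => sub_ne_zero.2 (hfree x))
  rw [continuousOn_univ] at hM
  have hid : ∀ n, ∃ κ : ℂ, exp κ = -1 ∧ M (e (d n)) - M (e 0) =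
      2 * κ + log ((e (d n) - e 1) / (e 0 - e 1)) +
      log ((e (d n) - e (d n - 1)) / (e 0 - e (d n - 1))) +
      (L (e (d n - 1), e (d n)) - L (e (d n - 1), e 0)) := fun n =>
    almost_closed_identity hL hM (fun x => hMexp x (mem_univ _)) he hstep
      (by linarith [hd2 n]) (fun s t hst _ => hinj.ne hst.ne)
      (fun t ht => hdmin n t (by
        rw [uIcc_of_le (by linarith [hd2 n])] at ht
        exact ⟨ht.1, by linarith [ht.2]⟩))
  choose κ hκ hid using hid
  have hlim : Tendsto (fun n => e (d n)) atTop (𝓝 (e 0)) := by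
    rw [tendsto_iff_norm_sub_tendsto_zero]
    exact squeeze_zero (fun _ => norm_nonneg _) hdn tendsto_one_div_add_atTop_nhds_zero_nat
  have hback : ∀ s, e (s - 1) = H.symm (e s) := fun s => by
    rw [Homeomorph.eq_symm_apply, ← hstep, sub_add_cancel]
  have hlim' : Tendsto (fun n => e (d n - 1)) atTop (𝓝 (e (0 - 1))) := by
    simp only [hback]
    exact (H.symm.continuous.tendsto _).comp hlim
  have hlog : ∀ (z : ℕ → ℂ) (w : ℂ), Tendsto z atTop (𝓝 w) → e 0 ≠ w →
      Tendsto (fun n => log ((e (d n) - z n) / (e 0 - z n))) atTop (𝓝 0) := by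
    intro z w hz hw
    have hw' : e 0 - w ≠ 0 := sub_ne_zero.2 hw
    have h1 : Tendsto (fun n => (e (d n) - z n) / (e 0 - z n)) atTop (𝓝 1) := by
      have := (hlim.sub hz).div (tendsto_const_nhds.sub hz) hw'
      rwa [div_self hw'] at this
    simpa using h1.clog one_mem_slitPlane
  have hMlim : Tendsto (fun n => M (e (d n)) - M (e 0)) atTop (𝓝 0) := by
    simpa using ((hM.tendsto _).comp hlim).sub_const (M (e 0))
  have hne : e (0 - 1) ≠ e 0 := hinj.ne (by norm_num)
  have hLlim : Tendsto (fun n => L (e (d n - 1), e (d n)) - L (e (d n - 1), e 0)) atTop (𝓝 0) := by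
    have hLat : ContinuousAt L (e (0 - 1), e 0) :=
      hL.1.continuousAt ((isOpen_ne_fun continuous_fst continuous_snd).mem_nhds hne)
    have h1 := hLat.tendsto.comp (hlim'.prodMk_nhds hlim)
    have h2 := hLat.tendsto.comp (hlim'.prodMk_nhds (tendsto_const_nhds (x := e 0)))
    simpa using h1.sub h2
  -- hence `κ n → 0`, although `exp (κ n) = -1`
  have hκlim : Tendsto κ atTop (𝓝 0) := by
    have := (((hMlim.sub (hlog (fun _ => e 1) _ tendsto_const_nhds (hinj.ne (by norm_num)))).sub
      (hlog _ _ hlim' hne.symm)).sub hLlim).div_const 2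
    simp only [sub_zero, zero_div] at this
    refine this.congr fun n => ?_
    rw [hid n]; ring
  have hexp := (continuous_exp.tendsto 0).comp hκlim
  have h3 : Tendsto (exp ∘ κ) atTop (𝓝 (-1)) := by
    have : exp ∘ κ = fun _ => -1 := funext hκ
    rw [this]; exact tendsto_const_nhds
  have := tendsto_nhds_unique hexp h3
  rw [exp_zero] at this
  norm_num at this

lemma trajectory_isEmbedding {H : ℂ ≃ₜ ℂ} {L : ℂ × ℂ → ℂ} (hL : IsDirectionLog H L)
    (hfree : ∀ x, H x ≠ x) {e : ℝ → ℂ} (he : Continuous e) (hstep : ∀ s, e (s + 1) = H (e s))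
    (hloc : ∀ s t, s < t → t ≤ s + 1 → e s ≠ e t) : IsEmbedding e := by
  have hinj := trajectory_injective hL hfree he hstep hloc
  refine ⟨isInducing_iff_nhds.2 fun s => le_antisymm (he.tendsto s).le_comap ?_, hinj⟩
  obtain ⟨ε₁, hε₁, hfwd⟩ := no_forward_return hL hfree (e := fun t => e (s + t)) (by fun_prop)
    (fun t => by simp only [← hstep, add_assoc]) (hinj.comp (add_right_injective s))
  -- the past is the future of the inverse homeomorphism
  obtain ⟨ε₂, hε₂, hbwd⟩ := no_forward_return hL.symm
    (fun x hx => hfree x (by rw [Homeomorph.symm_apply_eq] at hx; exact hx.symm))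
    (e := fun t => e (s - t)) (by fun_prop)
    (fun t => by rw [Homeomorph.eq_symm_apply, ← hstep]; congr 1; ring)
    (hinj.comp sub_right_injective)
  simp only [add_zero, sub_zero] at hfwd hbwd
  rw [(Metric.nhds_basis_ball.comap e).le_basis_iff Metric.nhds_basis_ball]
  intro η hη
  let K : Set ℝ := Icc (s - 1) (s + 1) ∩ {t | η ≤ |t - s|}
  have hK : IsCompact K := isCompact_Icc.inter_right
    (isClosed_le continuous_const (by fun_prop))
  obtain ⟨ε₃, hε₃, hmid⟩ : ∃ ε > 0, ∀ t ∈ K, ε ≤ ‖e t - e s‖ := by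
    rcases K.eq_empty_or_nonempty with h | h
    · exact ⟨1, one_pos, by simp [h]⟩
    · obtain ⟨b, hb, hbmin⟩ := hK.exists_isMinOn h
        (by fun_prop : Continuous fun t => ‖e t - e s‖).continuousOn
      refine ⟨_, norm_pos_iff.2 (sub_ne_zero.2 (hinj.ne ?_)), fun t ht => hbmin ht⟩
      rintro rfl
      have := hb.2
      simp only [sub_self, abs_zero, mem_ofPred_eq] at this
      linarith
  refine ⟨min ε₁ (min ε₂ ε₃), by positivity, fun t ht => ?_⟩
  rw [mem_preimage, Metric.mem_ball, dist_eq_norm, lt_min_iff, lt_min_iff] at ht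
  rw [Metric.mem_ball, Real.dist_eq]
  by_contra! hge
  by_cases h1 : 1 ≤ t - s
  · have := hfwd (t - s) h1
    rw [add_sub_cancel] at this
    linarith
  by_cases h2 : 1 ≤ s - t
  · have := hbwd (s - t) h2
    rw [sub_sub_cancel] at this
    linarith
  have := hmid t ⟨⟨by linarith, by linarith⟩, hge⟩
  linarith

/-- The parametrization `s ↦ h ^ ⌊s⌋ (γ (fract s))` of the trajectory by `ℝ`, with `s ↦ s + 1`
corresponding to `h`. -/
lemma exists_trajectory_param {X : Type*} [TopologicalSpace X] (h : X ≃ₜ X) {γ : ℝ → X}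
    (hγ : ContinuousOn γ (Icc 0 1)) (h01 : γ 1 = h (γ 0)) :
    ∃ e : ℝ → X, Continuous e ∧ (∀ s, e (s + 1) = h (e s)) ∧ (∀ s ∈ Icc (0 : ℝ) 1, e s = γ s) ∧
      range e = ⋃ n : ℤ, ⇑(h.toEquiv ^ n) '' (γ '' Icc 0 1) := by
  let toPerm : (X ≃ₜ X) →* Equiv.Perm X :=
    { toFun := Homeomorph.toEquiv, map_one' := rfl, map_mul' := fun _ _ => rfl }
  have hpow : ∀ n : ℤ, h.toEquiv ^ n = (h ^ n).toEquiv := fun n => (map_zpow toPerm h n).symm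
  have hpow' : ∀ (n : ℤ) x, (h.toEquiv ^ n) x = (h ^ n) x := fun n x => by rw [hpow]; rfl
  let e : ℝ → X := fun s => (h ^ ⌊s⌋) (γ (Int.fract s))
  have hpiece : ∀ (n : ℤ), ∀ s ∈ Icc (n : ℝ) (n + 1), e s = (h ^ n) (γ (s - n)) := by
    intro n s hs
    rcases hs.2.lt_or_eq with hlt | rfl
    · have : ⌊s⌋ = n := Int.floor_eq_iff.2 ⟨hs.1, hlt⟩
      simp only [e, Int.fract, this]
    · have : ⌊(n : ℝ) + 1⌋ = n + 1 := by simp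
      simp only [e, Int.fract, this]
      simp [zpow_add_one, h01]
  refine ⟨e, ?_, fun s => ?_, fun s hs => ?_, ?_⟩
  · have hlf : LocallyFinite fun n : ℤ => Icc (n : ℝ) (n + 1) := by
      refine locallyFinite_Icc_of_tendsto ?_ ?_
      · exact tendsto_intCast_atTop_atTop
      · exact tendsto_atBot_add_const_right _ _ (tendsto_intCast_atBot_iff.2 tendsto_id)
    refine hlf.continuous ?_ (fun _ => isClosed_Icc) fun n => ?_
    · exact eq_univ_of_forall fun s => mem_iUnion.2
        ⟨⌊s⌋, Int.floor_le s, (Int.lt_floor_add_one s).le⟩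
    · refine ContinuousOn.congr ?_ (hpiece n)
      refine (h ^ n).continuous.comp_continuousOn (hγ.comp (by fun_prop) fun s hs => ?_)
      exact ⟨by linarith [hs.1], by linarith [hs.2]⟩
  · simp only [e, Int.floor_add_one, Int.fract_add_one]
    rw [add_comm, zpow_one_add, Homeomorph.mul_apply]
  · simpa using hpiece 0 s (by simpa using hs)
  · ext x
    simp only [mem_range, mem_iUnion, mem_image, exists_exists_and_eq_and, hpow']
    constructor
    · rintro ⟨s, rfl⟩
      exact ⟨⌊s⌋, Int.fract s, ⟨Int.fract_nonneg _, (Int.fract_lt_one _).le⟩, rfl⟩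
    · rintro ⟨n, t, ht, rfl⟩
      refine ⟨n + t, ?_⟩
      rw [hpiece n _ ⟨by linarith [ht.1], by linarith [ht.2]⟩, add_sub_cancel_left]

/-- The trajectory of a translation arc of a Brouwer homeomorphism is an embedded
copy of ℝ (a submanifold of the plane homeomorphic to ℝ). -/
theorem stmt12 (h : Homeomorph Plane Plane)
    (hfree : ∀ x : Plane, h x ≠ x) (hor : IsotopicToId ⇑h)
    (p : Plane) (γ : ℝ → Plane) (α : Set Plane)
    (hγc : ContinuousOn γ (Set.Icc 0 1)) (hγi : Set.InjOn γ (Set.Icc 0 1))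
    (h0 : γ 0 = p) (h1 : γ 1 = h p) (hα : α = γ '' Set.Icc 0 1)
    (htrans : α ∩ ⇑h '' α = {h p})
    (l : Set Plane) (hl : l = ⋃ n : ℤ, ⇑(h.toEquiv ^ n) '' α) :
    ∃ e : ℝ → Plane, Topology.IsEmbedding e ∧ Set.range e = l := by
  obtain ⟨e, he, hstep, heγ, hrange⟩ := exists_trajectory_param h hγc (by rw [h1, h0])
  refine ⟨e, ?_, by rw [hrange, hl, hα]⟩
  let c : Plane ≃ₜ ℂ := Complex.orthonormalBasisOneI.repr.symm.toHomeomorph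
  obtain ⟨F, hF, hFh, hF0, hF1⟩ := hor
  obtain ⟨L, hL⟩ := exists_directionLog_of_isotopy (fun t z => c (F t (c.symm z)))
    (c.continuous.comp (hF.comp (f := fun q : ℝ × ℂ => (q.1, c.symm q.2)) (by fun_prop)))
    (fun t => by
      obtain ⟨g, hg⟩ := hFh t
      rw [← hg]
      exact c.injective.comp (g.injective.comp c.symm.injective))
    (by ext z; simp [hF0])
  let H : ℂ ≃ₜ ℂ := (c.symm.trans h).trans c
  have hH : (fun z => c (F 1 (c.symm z))) = H := by rw [hF1]; rfl
  simp only [hH] at hL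
  suffices hemb : IsEmbedding fun s => c (e s) from
    (c.isEmbedding.of_comp_iff (f := e)).1 hemb
  have hstepc : ∀ s, c (e (s + 1)) = H (c (e s)) := fun s => by simp [H, hstep]
  refine trajectory_isEmbedding hL ?_ (by fun_prop) hstepc ?_
  · intro z hz
    refine hfree (c.symm z) (c.injective ?_)
    simpa [H] using hz
  · -- it suffices to treat `s ∈ [0, 1)`, where `htrans` applies
    have hbase : ∀ s t : ℝ, 0 ≤ s → s < 1 → s < t → t ≤ s + 1 → e s ≠ e t := by
      intro s t hs0 hs1 hst hts heq
      by_cases ht : t ≤ 1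
      · rw [heγ s ⟨hs0, hs1.le⟩, heγ t ⟨by linarith, ht⟩] at heq
        exact hst.ne (hγi ⟨hs0, hs1.le⟩ ⟨by linarith, ht⟩ heq)
      · have hm : e s ∈ α ∩ h '' α := by
          rw [hα]
          refine ⟨⟨s, ⟨hs0, hs1.le⟩, (heγ s ⟨hs0, hs1.le⟩).symm⟩, γ (t - 1),
            ⟨t - 1, ⟨by linarith, by linarith⟩, rfl⟩, ?_⟩
          rw [← heγ (t - 1) ⟨by linarith, by linarith⟩, ← hstep, sub_add_cancel, heq]
        rw [htrans, mem_singleton_iff, ← h1, heγ s ⟨hs0, hs1.le⟩] at hm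
        exact hs1.ne (hγi ⟨hs0, hs1.le⟩ ⟨zero_le_one, le_rfl⟩ hm)
    intro s t hst hts heq
    have h2 := c.injective (trajectory_shift (e := fun s => c (e s)) hstepc (-⌊s⌋) heq)
    have h3 : s + ((-⌊s⌋ : ℤ) : ℝ) = Int.fract s := by rw [Int.fract]; push_cast; ring
    rw [h3] at h2
    refine hbase _ _ (Int.fract_nonneg s) (Int.fract_lt_one s) ?_ ?_ h2 <;>
      rw [← h3] <;> linarith
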